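/- The 16×16 matrix D = (1/4)·Σ_{i=1}^4 Π_i⊗Π_i (first Bell projector on qubits A'B', second on A''B'') is separable across the partition A=(A',A''), B=(B',B''). -/

import Mathlib

open Matrix Complex
open scoped Kronecker ComplexOrder

noncomputable section
namespace Paper

abbrev Q2 := Fin 2 × Fin 2
abbrev M4 := Matrix Q2 Q2 ℂ
abbrev M16 := Matrix (Q2 × Q2) (Q2 × Q2) ℂ

/-- `1/√2` as a complex number. -/
def invSqrt2 : ℂ := ((Real.sqrt 2)⁻¹ : ℝ)

/-- The four Bell states `|Φ₁⟩,…,|Φ₄⟩` as vectors in `ℂ²⊗ℂ²`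
(product basis indexed by `Fin 2 × Fin 2`). -/
def bell : Fin 4 → Q2 → ℂ :=
  ![fun p => !![invSqrt2, 0; 0, invSqrt2] p.1 p.2,
    fun p => !![invSqrt2, 0; 0, -invSqrt2] p.1 p.2,
    fun p => !![0, invSqrt2; invSqrt2, 0] p.1 p.2,
    fun p => !![0, invSqrt2; -invSqrt2, 0] p.1 p.2]

/-- The Bell projectors `Π_i = |Φ_i⟩⟨Φ_i|`. -/
def BellProj (i : Fin 4) : M4 := vecMulVec (bell i) (star (bell i))

/-- The Pauli matrices `σ_x, σ_y, σ_z`. -/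
def pauli : Fin 3 → Matrix (Fin 2) (Fin 2) ℂ :=
  ![!![0, 1; 1, 0], !![0, -I; I, 0], !![1, 0; 0, -1]]

/-- Reindexing `((a',b'),(a'',b'')) ↦ ((a',a''),(b',b''))`. -/
def swapMid : (Q2 × Q2) ≃ (Q2 × Q2) where
  toFun p := ((p.1.1, p.2.1), (p.1.2, p.2.2))
  invFun p := ((p.1.1, p.2.1), (p.1.2, p.2.2))
  left_inv _ := rfl
  right_inv _ := rfl

/-- The rank-one matrix `x x†`. -/
def pureMat {d : Type*} (x : d → ℂ) : Matrix d d ℂ := vecMulVec x (star x)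

/-- Separability of a 16×16 four-qubit matrix (qubit order A',B',A'',B'')
across the partition A = (A',A''), B = (B',B''). -/
def SepAB (ρ : M16) : Prop :=
  ∃ (n : ℕ) (x y : Fin n → Q2 → ℂ),
    (Matrix.reindex swapMid swapMid ρ) = ∑ k, (pureMat (x k)) ⊗ₖ (pureMat (y k))

/-!
Each Bell projector is a signed average of the operators `σⱼ ⊗ σⱼ` (with `σ₀ = 1`), and the four
sign patterns are the rows of a Hadamard matrix. Orthogonality of its columns cancels all cross
terms in `∑ᵢ Πᵢ ⊗ Πᵢ` and leaves `(1/4) ∑ⱼ σⱼ ⊗ σⱼ ⊗ σⱼ ⊗ σⱼ`, which is invariant under every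
permutation of the four qubits. Exchanging `B'` with `A''` therefore turns the defining
decomposition of `D` into one whose terms are products across the partition `A`, `B`.
-/

theorem pureMat_smul {d : Type*} (c : ℂ) (x : d → ℂ) :
    pureMat (c • x) = (c * star c) • pureMat x := by
  rw [pureMat, pureMat, star_smul, smul_vecMulVec, vecMulVec_smul, smul_smul]

theorem SepAB.smul {ρ : M16} (hρ : SepAB ρ) {c : ℂ} (hc : 0 ≤ c) : SepAB (c • ρ) := by
  obtain ⟨n, x, y, hxy⟩ := hρ
  obtain ⟨r, hr, rfl⟩ := RCLike.nonneg_iff_exists_ofReal.mp hc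
  have sqrt_mul_star : ((√r : ℝ) : ℂ) * star ((√r : ℝ) : ℂ) = r := by
    rw [Complex.star_def, conj_ofReal, ← ofReal_mul, Real.mul_self_sqrt hr]
  refine ⟨n, fun k => ((√r : ℝ) : ℂ) • x k, y, ?_⟩
  simp only [pureMat_smul, sqrt_mul_star, smul_kronecker, ← Finset.smul_sum, ← hxy]
  rfl

theorem reindex_swapMid_kronecker_kronecker (A B C D : Matrix (Fin 2) (Fin 2) ℂ) :
    reindex swapMid swapMid ((A ⊗ₖ B) ⊗ₖ (C ⊗ₖ D)) = (A ⊗ₖ C) ⊗ₖ (B ⊗ₖ D) := by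
  ext p q
  exact mul_mul_mul_comm _ _ _ _

theorem sum_kronecker_sum_smul {R ι κ κ' l m n p : Type*} [CommSemiring R] [Fintype ι] [Fintype κ]
    [Fintype κ'] (H : Matrix ι κ R) (K : Matrix ι κ' R) (S : κ → Matrix l m R)
    (T : κ' → Matrix n p R) :
    ∑ i, (∑ j, H i j • S j) ⊗ₖ (∑ k, K i k • T k) =
      ∑ j, ∑ k, (Hᵀ * K) j k • (S j ⊗ₖ T k) := by
  have kronecker_expand (i : ι) : (∑ j, H i j • S j) ⊗ₖ (∑ k, K i k • T k) =
      ∑ j, ∑ k, (H i j * K i k) • (S j ⊗ₖ T k) := by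
    ext s t
    simp only [kroneckerMap_apply, Matrix.sum_apply, Matrix.smul_apply, smul_eq_mul,
      Finset.sum_mul_sum, mul_mul_mul_comm]
  simp only [kronecker_expand, mul_apply, transpose_apply, Finset.sum_smul]
  rw [Finset.sum_comm]
  exact Finset.sum_congr rfl fun j _ => Finset.sum_comm

/-- The basis `1, σ_x, σ_y, σ_z` of the `2 × 2` matrices, in which the Bell projectors are
expanded; the identity is prepended to `pauli` at index `0`. -/
def pauliBasis : Fin 4 → Matrix (Fin 2) (Fin 2) ℂ :=
  vecCons 1 pauli

/-- The Hadamard matrix whose `(i, j)` entry is the eigenvalue of `σⱼ ⊗ σⱼ` on the Bell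
state `Φᵢ`. Rows are indexed as `bell`, columns as `pauliBasis`. -/
def bellSign : Matrix (Fin 4) (Fin 4) ℂ :=
  !![1, 1, -1, 1;
     1, -1, 1, 1;
     1, 1, 1, -1;
     1, -1, -1, -1]

theorem bellSign_transpose_mul_self : bellSignᵀ * bellSign = (4 : ℂ) • 1 := by
  ext i j
  fin_cases i <;> fin_cases j <;> simp [bellSign, mul_apply, Fin.sum_univ_four] <;> norm_num

theorem invSqrt2_mul_self : invSqrt2 * invSqrt2 = 1 / 2 := by
  rw [invSqrt2, ← ofReal_mul, ← mul_inv, Real.mul_self_sqrt zero_le_two]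
  norm_num

theorem star_invSqrt2 : star invSqrt2 = invSqrt2 :=
  conj_ofReal _

theorem bellProj_eq_sum_pauliBasis (i : Fin 4) :
    BellProj i = (1 / 4 : ℂ) • ∑ j, bellSign i j • (pauliBasis j ⊗ₖ pauliBasis j) := by
  ext ⟨a, b⟩ ⟨c, d⟩
  simp only [BellProj, vecMulVec_apply, Pi.star_apply, Matrix.smul_apply, Fin.sum_univ_four,
    Matrix.add_apply, kroneckerMap_apply]
  fin_cases i <;> fin_cases a <;> fin_cases b <;> fin_cases c <;> fin_cases d <;>
    simp [bell, bellSign, pauliBasis, pauli, star_invSqrt2, invSqrt2_mul_self] <;> norm_num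

theorem sum_bellProj_kronecker_self :
    ∑ i, BellProj i ⊗ₖ BellProj i =
      (1 / 4 : ℂ) • ∑ j, (pauliBasis j ⊗ₖ pauliBasis j) ⊗ₖ (pauliBasis j ⊗ₖ pauliBasis j) := by
  simp only [bellProj_eq_sum_pauliBasis, smul_kronecker, kronecker_smul, ← Finset.smul_sum,
    sum_kronecker_sum_smul, bellSign_transpose_mul_self, Matrix.smul_apply, one_apply, smul_eq_mul,
    mul_ite, mul_one, mul_zero, ite_smul, zero_smul, Finset.sum_ite_eq, Finset.mem_univ, if_true,
    smul_smul]
  norm_num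

theorem reindex_swapMid_sum_bellProj_kronecker_self :
    reindex swapMid swapMid (∑ i, BellProj i ⊗ₖ BellProj i) = ∑ i, BellProj i ⊗ₖ BellProj i := by
  rw [sum_bellProj_kronecker_self, ← coe_reindexLinearEquiv ℂ ℂ, map_smul, map_sum]
  simp only [coe_reindexLinearEquiv, reindex_swapMid_kronecker_kronecker]

/-- The state `D = (1/4)·Σ_i Π_i ⊗ Π_i` is separable across the
partition A = (A',A''), B = (B',B''). -/
theorem stmt2 :
    SepAB ((1 / 4 : ℂ) • ∑ i : Fin 4, BellProj i ⊗ₖ BellProj i) := by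
  have sum_sep : SepAB (∑ i, BellProj i ⊗ₖ BellProj i) :=
    ⟨4, bell, bell, reindex_swapMid_sum_bellProj_kronecker_self⟩
  exact sum_sep.smul (by positivity)

end Paper
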